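/- Let E be a real inner product space, v₁, …, vₙ ∈ E vectors whose Gram matrix K (Kᵢⱼ = ⟨vᵢ, vⱼ⟩) is positive definite, μ ∈ E, z ∈ ℝⁿ with zᵢ = ⟨μ, vᵢ⟩, and r ≥ 1. Let m > 0 be the smallest 2r-sparse eigenvalue of K and M the largest (r+1)-sparse eigenvalue of K. Define g(S) = z_Sᵀ (K_{SS})⁻¹ z_S. Then g is (m/M)-weakly submodular when restricted to sets of bounded size: for all disjoint L, S ⊆ {1, …, n} with |L| + |S| ≤ 2r and |L| ≤ r, Σ_{j∈S} [g(L ∪ {j}) − g(L)] ≥ (m/M)·[g(L ∪ S) − g(L)]. -/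

import Mathlib

open Matrix
open scoped RealInnerProductSpace Classical

/-- The set of Rayleigh quotients `xᵀ K x / xᵀ x` of `K` over nonzero `k`-sparse vectors
`x ∈ ℝⁿ` (vectors with at most `k` nonzero entries).  Its infimum (resp. supremum) is the
smallest (resp. largest) `k`-sparse eigenvalue of `K`. -/
noncomputable def sparseRayleigh {n : ℕ} (K : Matrix (Fin n) (Fin n) ℝ) (k : ℕ) : Set ℝ :=
  {r | ∃ x : Fin n → ℝ, x ≠ 0 ∧ (Finset.univ.filter fun i => x i ≠ 0).card ≤ k ∧
    r = (x ⬝ᵥ (K *ᵥ x)) / (x ⬝ᵥ x)}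

/-- The SBQ set objective `g(S) = z_Sᵀ (K_{SS})⁻¹ z_S`, where `z_S` is the subvector of `z`
on indices in `S` and `K_{SS}` is the principal submatrix of `K` on `S`. -/
noncomputable def gObj {n : ℕ} (K : Matrix (Fin n) (Fin n) ℝ) (z : Fin n → ℝ)
    (S : Finset (Fin n)) : ℝ :=
  (fun i : S => z i.1) ⬝ᵥ
    ((K.submatrix (fun i : S => i.1) (fun j : S => j.1))⁻¹ *ᵥ fun i : S => z i.1)

/-!
For weights `x` supported on `S`, the fit of `μ` by `∑ xᵢ vᵢ` reduces the squared error `‖μ‖²` by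
`2 zᵀx - xᵀKx`, and `g(S)` is the maximum of this concave quadratic. Let `w` be the optimal weights
on `L` and `ρ = z - Kw` the residual correlations, which vanish on `L`. Moving from `w` to `w + d`
changes the reduction by `2 ρᵀd - dᵀKd`.

* Taking `d` along the single coordinate `j`, with the step `ρⱼ / M` that is optimal for the
  curvature bound `Kⱼⱼ ≤ M`, gives `g(L ∪ {j}) - g(L) ≥ ρⱼ² / M`.
* For the optimum on `L ∪ S`, `2 ρᵀd - dᵀKd ≤ 2 ρᵀd - m ‖d‖² ≤ m⁻¹ ∑_{j ∈ S} ρⱼ²`.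
-/

section Support

variable {ι κ R : Type*} [Fintype ι]

theorem dotProduct_eq_zero_of_support_subset [NonUnitalNonAssocSemiring R] {s : Set ι}
    {a x : ι → R} (ha : ∀ i ∈ s, a i = 0) (hx : Function.support x ⊆ s) : a ⬝ᵥ x = 0 := by
  refine Finset.sum_eq_zero fun i _ => ?_
  by_cases hi : i ∈ s
  · rw [ha i hi, zero_mul]
  · rw [Function.support_subset_iff'.mp hx i hi, mul_zero]

theorem dotProduct_eq_sum_of_support_subset [NonUnitalNonAssocSemiring R] {S : Finset ι}
    {x : ι → R} (a : ι → R) (hx : Function.support x ⊆ S) : a ⬝ᵥ x = ∑ i ∈ S, a i * x i := by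
  refine (Finset.sum_subset S.subset_univ fun i _ hi => ?_).symm
  rw [Function.support_subset_iff'.mp hx i hi, mul_zero]

theorem dotProduct_extend_zero [Fintype κ] [NonUnitalNonAssocSemiring R] {e : κ → ι}
    (he : e.Injective) (a : ι → R) (y : κ → R) :
    a ⬝ᵥ Function.extend e y 0 = (a ∘ e) ⬝ᵥ y := by
  refine (Fintype.sum_of_injective e he _ _ (fun i hi => ?_) fun k => ?_).symm
  · rw [Function.extend_apply' _ _ _ hi, Pi.zero_apply, mul_zero]
  · rw [he.extend_apply, Function.comp_apply]

end Support

section FitReduction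

variable {ι R : Type*} [Fintype ι] [CommRing R]

/-- The reduction `‖μ‖² - ‖μ - ∑ xᵢ vᵢ‖²` of the least-squares objective achieved by the weights
`x`, in terms of the Gram matrix `K` of `v` and the correlations `zᵢ = ⟪μ, vᵢ⟫`. -/
def fitReduction (K : Matrix ι ι R) (z x : ι → R) : R :=
  2 * (z ⬝ᵥ x) - x ⬝ᵥ (K *ᵥ x)

theorem fitReduction_add {K : Matrix ι ι R} (hK : K.IsSymm) (z x d : ι → R) :
    fitReduction K z (x + d) = fitReduction K z x + fitReduction K (z - K *ᵥ x) d := by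
  have hxd : x ⬝ᵥ (K *ᵥ d) = (K *ᵥ x) ⬝ᵥ d := by
    rw [dotProduct_comm (K *ᵥ x), ← dotProduct_transpose_mulVec, hK.eq]
  simp only [fitReduction, mulVec_add, add_dotProduct, dotProduct_add, sub_dotProduct, hxd,
    dotProduct_comm d (K *ᵥ x)]
  ring

theorem fitReduction_single [DecidableEq ι] (K : Matrix ι ι R) (z : ι → R) (j : ι) (t : R) :
    fitReduction K z (Pi.single j t) = 2 * (z j * t) - K j j * t ^ 2 := by
  simp only [fitReduction, dotProduct_single, single_dotProduct, mulVec_single, Pi.smul_apply,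
    MulOpposite.smul_eq_mul_unop, MulOpposite.unop_op, col_apply]
  ring

end FitReduction

section Coercive

variable {ι R : Type*} [Fintype ι] [CommRing R] [LinearOrder R]

/-- `K` is coercive with constant `c` on the vectors supported in `S`. For symmetric `K` this
says that the eigenvalues of the principal submatrix `K_{SS}` are at least `c`. -/
def IsCoerciveOn (K : Matrix ι ι R) (c : R) (S : Finset ι) : Prop :=
  ∀ ⦃x : ι → R⦄, Function.support x ⊆ S → c * (x ⬝ᵥ x) ≤ x ⬝ᵥ (K *ᵥ x)

variable {K : Matrix ι ι R} {c : R} {S T : Finset ι}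

theorem IsCoerciveOn.mono (hK : IsCoerciveOn K c T) (hST : S ⊆ T) : IsCoerciveOn K c S :=
  fun _ hx => hK (hx.trans (Finset.coe_subset.mpr hST))

theorem IsCoerciveOn.le_diag (hK : IsCoerciveOn K c S) {j : ι} (hj : j ∈ S) : c ≤ K j j := by
  classical
  have hsupp : Function.support (Pi.single j 1 : ι → R) ⊆ S :=
    Pi.support_single_subset.trans (by simpa using hj)
  simpa using hK hsupp

variable [IsStrictOrderedRing R]

theorem IsCoerciveOn.mul_fitReduction_le_sum_sq (hK : IsCoerciveOn K c S) (hc : 0 ≤ c)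
    (z : ι → R) {x : ι → R} (hx : Function.support x ⊆ S) :
    c * fitReduction K z x ≤ ∑ i ∈ S, z i ^ 2 :=
  calc c * fitReduction K z x
      ≤ c * (2 * (z ⬝ᵥ x) - c * (x ⬝ᵥ x)) :=
        mul_le_mul_of_nonneg_left (sub_le_sub_left (hK hx) _) hc
    _ = ∑ i ∈ S, (2 * z i * (c * x i) - (c * x i) ^ 2) := by
        rw [dotProduct_eq_sum_of_support_subset z hx, dotProduct_eq_sum_of_support_subset x hx,
          Finset.mul_sum, Finset.mul_sum, ← Finset.sum_sub_distrib, Finset.mul_sum]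
        exact Finset.sum_congr rfl fun i _ => by ring
    _ ≤ ∑ i ∈ S, z i ^ 2 := by
        gcongr with i
        linarith [two_mul_le_add_sq (z i) (c * x i)]

end Coercive

theorem IsCoerciveOn.isUnit_submatrix {ι R : Type*} [Fintype ι] [DecidableEq ι] [Field R]
    [LinearOrder R] [IsStrictOrderedRing R] {K : Matrix ι ι R} {c : R} {S : Finset ι}
    (hK : IsCoerciveOn K c S) (hc : 0 < c) :
    IsUnit (K.submatrix (fun i : S => i.1) (fun j : S => j.1)) := by
  refine mulVec_injective_iff_isUnit.mp <| (injective_iff_map_eq_zero (mulVecLin _)).mpr ?_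
  intro y (hy : K.submatrix (fun i : S => i.1) (fun j : S => j.1) *ᵥ y = 0)
  set e : S → ι := fun i => i.1
  have he : e.Injective := Subtype.val_injective
  set x : ι → R := Function.extend e y 0
  have hx : Function.support x ⊆ S := Function.support_extend_zero_subset.trans (by simp [e])
  have hxx : x ⬝ᵥ x = y ⬝ᵥ y := by
    rw [dotProduct_extend_zero he, Function.extend_comp he]
  have hKx : (K *ᵥ x) ∘ e = 0 := by
    rw [← hy]
    exact funext fun i => dotProduct_extend_zero he _ _
  have hquad : x ⬝ᵥ (K *ᵥ x) = 0 := by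
    rw [dotProduct_comm, dotProduct_extend_zero he, hKx, zero_dotProduct]
  have hyy : y ⬝ᵥ y ≤ 0 := by
    rw [← hxx]
    exact nonpos_of_mul_nonpos_right ((hK hx).trans_eq hquad) hc
  exact dotProduct_self_eq_zero.mp (hyy.antisymm (Finset.sum_nonneg fun i _ => mul_self_nonneg _))

section SparseRayleigh

variable {n : ℕ} {K : Matrix (Fin n) (Fin n) ℝ} {k : ℕ}

theorem isBounded_sparseRayleigh (K : Matrix (Fin n) (Fin n) ℝ) (k : ℕ) :
    Bornology.IsBounded (sparseRayleigh K k) := by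
  set T := toEuclideanCLM (𝕜 := ℝ) K
  refine (Metric.isBounded_closedBall (x := (0 : ℝ)) (r := ‖T‖)).subset ?_
  rintro _ ⟨x, -, -, rfl⟩
  have h : T.rayleighQuotient (WithLp.toLp 2 x) = (x ⬝ᵥ (K *ᵥ x)) / (x ⬝ᵥ x) := by
    rw [ContinuousLinearMap.rayleighQuotient, ContinuousLinearMap.reApplyInnerSelf_apply,
      real_inner_comm, inner_toEuclideanCLM, ← real_inner_self_eq_norm_sq,
      EuclideanSpace.inner_toLp_toLp, star_trivial, RCLike.re_to_real]
  rw [mem_closedBall_zero_iff, ← h]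
  exact T.rayleighQuotient_le_norm _

theorem isCoerciveOn_sInf_sparseRayleigh {S : Finset (Fin n)} (hS : S.card ≤ k) :
    IsCoerciveOn K (sInf (sparseRayleigh K k)) S := by
  intro x hx
  rcases eq_or_ne x 0 with rfl | hx0
  · simp
  have hxx : 0 < x ⬝ᵥ x := by simpa using dotProduct_star_self_pos_iff.mpr hx0
  rw [← le_div_iff₀ hxx]
  refine csInf_le (isBounded_sparseRayleigh K k).bddBelow ⟨x, hx0, ?_, rfl⟩
  refine (Finset.card_le_card fun i hi => ?_).trans hS
  exact hx (Finset.mem_filter.mp hi).2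

theorem diag_le_sSup_sparseRayleigh (hk : 1 ≤ k) (j : Fin n) :
    K j j ≤ sSup (sparseRayleigh K k) := by
  refine le_csSup (isBounded_sparseRayleigh K k).bddAbove ⟨Pi.single j 1, by simp, ?_, by simp⟩
  refine (Finset.card_le_one.mpr fun a ha b hb => ?_).trans hk
  simp only [Finset.mem_filter, Finset.mem_univ, true_and, ne_eq, Pi.single_apply,
    ite_eq_right_iff, one_ne_zero, imp_false, not_not] at ha hb
  rw [ha, hb]

end SparseRayleigh

section Objective

variable {n : ℕ} {K : Matrix (Fin n) (Fin n) ℝ} {S L : Finset (Fin n)} {c M : ℝ}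

/-- The least-squares weights `(K_{SS})⁻¹ z_S`, extended by zero to all coordinates. -/
noncomputable def fitWeights (K : Matrix (Fin n) (Fin n) ℝ) (z : Fin n → ℝ)
    (S : Finset (Fin n)) : Fin n → ℝ :=
  Function.extend (fun i : S => i.1)
    ((K.submatrix (fun i : S => i.1) (fun j : S => j.1))⁻¹ *ᵥ fun i : S => z i.1) 0

/-- The correlations of the `vᵢ` with the part of `μ` that the least-squares fit on `S` leaves
unexplained. -/
noncomputable def fitResidual (K : Matrix (Fin n) (Fin n) ℝ) (z : Fin n → ℝ)
    (S : Finset (Fin n)) : Fin n → ℝ :=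
  z - K *ᵥ fitWeights K z S

theorem support_fitWeights_subset (K : Matrix (Fin n) (Fin n) ℝ) (z : Fin n → ℝ)
    (S : Finset (Fin n)) : Function.support (fitWeights K z S) ⊆ S :=
  Function.support_extend_zero_subset.trans (by simp)

theorem dotProduct_fitWeights (K : Matrix (Fin n) (Fin n) ℝ) (z : Fin n → ℝ)
    (S : Finset (Fin n)) : z ⬝ᵥ fitWeights K z S = gObj K z S :=
  dotProduct_extend_zero Subtype.val_injective _ _

theorem IsCoerciveOn.fitResidual_apply_of_mem (hK : IsCoerciveOn K c S) (hc : 0 < c)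
    (z : Fin n → ℝ) {i : Fin n} (hi : i ∈ S) : fitResidual K z S i = 0 := by
  set A := K.submatrix (fun i : S => i.1) (fun j : S => j.1)
  have hdet : IsUnit A.det := (isUnit_iff_isUnit_det A).mp (hK.isUnit_submatrix hc)
  have hKw : (K *ᵥ fitWeights K z S) i = (A *ᵥ (A⁻¹ *ᵥ fun i : S => z i.1)) ⟨i, hi⟩ :=
    dotProduct_extend_zero Subtype.val_injective _ _
  rw [fitResidual, Pi.sub_apply, hKw, mulVec_mulVec, mul_nonsing_inv _ hdet, one_mulVec, sub_self]

theorem IsCoerciveOn.fitReduction_fitWeights (hK : IsCoerciveOn K c S) (hc : 0 < c)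
    (z : Fin n → ℝ) : fitReduction K z (fitWeights K z S) = gObj K z S := by
  have horth : (z - K *ᵥ fitWeights K z S) ⬝ᵥ fitWeights K z S = 0 :=
    dotProduct_eq_zero_of_support_subset (fun _ hi => hK.fitResidual_apply_of_mem hc z hi)
      (support_fitWeights_subset K z S)
  rw [sub_dotProduct, dotProduct_comm (K *ᵥ _), dotProduct_fitWeights, sub_eq_zero] at horth
  rw [fitReduction, dotProduct_fitWeights, ← horth]
  ring

theorem IsCoerciveOn.fitReduction_fitWeights_add (hK : IsCoerciveOn K c S) (hc : 0 < c)
    (hsymm : K.IsSymm) (z d : Fin n → ℝ) :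
    fitReduction K z (fitWeights K z S + d) =
      gObj K z S + fitReduction K (fitResidual K z S) d := by
  rw [fitReduction_add hsymm, hK.fitReduction_fitWeights hc, fitResidual]

theorem IsCoerciveOn.fitReduction_le_gObj (hK : IsCoerciveOn K c S) (hc : 0 < c)
    (hsymm : K.IsSymm) (z : Fin n → ℝ) {x : Fin n → ℝ} (hx : Function.support x ⊆ S) :
    fitReduction K z x ≤ gObj K z S := by
  set d := x - fitWeights K z S
  have hd : Function.support d ⊆ S :=
    (Function.support_sub _ _).trans (Set.union_subset hx (support_fitWeights_subset K z S))
  have hgain : c * fitReduction K (fitResidual K z S) d ≤ 0 :=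
    (hK.mul_fitReduction_le_sum_sq hc.le _ hd).trans_eq <|
      Finset.sum_eq_zero fun i hi => by rw [hK.fitResidual_apply_of_mem hc z hi, sq, zero_mul]
  calc fitReduction K z x
      = gObj K z S + fitReduction K (fitResidual K z S) d := by
        rw [← hK.fitReduction_fitWeights_add hc hsymm, add_sub_cancel]
    _ ≤ gObj K z S := add_le_of_nonpos_right (nonpos_of_mul_nonpos_right hgain hc)

theorem IsCoerciveOn.sq_fitResidual_div_le_gObj_insert_sub {j : Fin n}
    (hK : IsCoerciveOn K c (insert j L)) (hc : 0 < c) (hsymm : K.IsSymm) (z : Fin n → ℝ)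
    (hjM : K j j ≤ M) :
    fitResidual K z L j ^ 2 / M ≤ gObj K z (insert j L) - gObj K z L := by
  have hM : 0 < M := hc.trans_le ((hK.le_diag (Finset.mem_insert_self j L)).trans hjM)
  set ρ := fitResidual K z L
  set d : Fin n → ℝ := Pi.single j (ρ j / M)
  have hd : Function.support (fitWeights K z L + d) ⊆ (insert j L : Finset (Fin n)) := by
    rw [Finset.coe_insert, Set.insert_eq, Set.union_comm]
    exact (Function.support_add _ _).trans
      (Set.union_subset_union (support_fitWeights_subset K z L) Pi.support_single_subset)
  rw [le_sub_iff_add_le']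
  calc gObj K z L + ρ j ^ 2 / M
      = gObj K z L + (2 * (ρ j * (ρ j / M)) - M * (ρ j / M) ^ 2) := by field_simp; ring
    _ ≤ gObj K z L + (2 * (ρ j * (ρ j / M)) - K j j * (ρ j / M) ^ 2) := by gcongr
    _ = fitReduction K z (fitWeights K z L + d) := by
        rw [(hK.mono (Finset.subset_insert j L)).fitReduction_fitWeights_add hc hsymm,
          fitReduction_single]
    _ ≤ gObj K z (insert j L) := hK.fitReduction_le_gObj hc hsymm z hd

theorem IsCoerciveOn.mul_gObj_union_sub_le_sum_sq_fitResidual (hK : IsCoerciveOn K c (L ∪ S))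
    (hc : 0 < c) (hsymm : K.IsSymm) (z : Fin n → ℝ) :
    c * (gObj K z (L ∪ S) - gObj K z L) ≤ ∑ j ∈ S, fitResidual K z L j ^ 2 := by
  have hL : IsCoerciveOn K c L := hK.mono Finset.subset_union_left
  set d := fitWeights K z (L ∪ S) - fitWeights K z L
  have hd : Function.support d ⊆ (L ∪ S : Finset (Fin n)) :=
    (Function.support_sub _ _).trans <| Set.union_subset (support_fitWeights_subset K z _) <|
      (support_fitWeights_subset K z L).trans (Finset.coe_subset.mpr Finset.subset_union_left)
  calc c * (gObj K z (L ∪ S) - gObj K z L)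
      = c * fitReduction K (fitResidual K z L) d := by
        rw [← hK.fitReduction_fitWeights hc, ← add_sub_cancel (fitWeights K z L) (fitWeights K z _),
          hL.fitReduction_fitWeights_add hc hsymm, add_sub_cancel_left]
    _ ≤ ∑ j ∈ L ∪ S, fitResidual K z L j ^ 2 := hK.mul_fitReduction_le_sum_sq hc.le _ hd
    _ = ∑ j ∈ S, fitResidual K z L j ^ 2 := by
        refine (Finset.sum_subset Finset.subset_union_right fun j hj hjS => ?_).symm
        have hjL : j ∈ L := (Finset.mem_union.mp hj).resolve_right hjS
        rw [hL.fitResidual_apply_of_mem hc z hjL, sq, zero_mul]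

theorem IsCoerciveOn.mul_gObj_union_sub_le_sum (hK : IsCoerciveOn K c (L ∪ S)) (hc : 0 < c)
    (hsymm : K.IsSymm) (z : Fin n → ℝ) (hM : ∀ j ∈ S, K j j ≤ M) :
    c / M * (gObj K z (L ∪ S) - gObj K z L) ≤
      ∑ j ∈ S, (gObj K z (insert j L) - gObj K z L) := by
  rcases S.eq_empty_or_nonempty with rfl | ⟨i, hi⟩
  · simp
  have hM0 : 0 < M := hc.trans_le ((hK.le_diag (Finset.mem_union_right L hi)).trans (hM i hi))
  calc c / M * (gObj K z (L ∪ S) - gObj K z L)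
      = c * (gObj K z (L ∪ S) - gObj K z L) / M := div_mul_eq_mul_div _ _ _
    _ ≤ (∑ j ∈ S, fitResidual K z L j ^ 2) / M := by
        gcongr
        exact hK.mul_gObj_union_sub_le_sum_sq_fitResidual hc hsymm z
    _ = ∑ j ∈ S, fitResidual K z L j ^ 2 / M := Finset.sum_div _ _ _
    _ ≤ ∑ j ∈ S, (gObj K z (insert j L) - gObj K z L) := by
        refine Finset.sum_le_sum fun j hj => ?_
        have hsub : insert j L ⊆ L ∪ S :=
          Finset.insert_subset (Finset.mem_union_right _ hj) Finset.subset_union_left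
        exact (hK.mono hsub).sq_fitResidual_div_le_gObj_insert_sub hc hsymm z (hM j hj)

end Objective

theorem gObj_weakly_submodular_general {n : ℕ} {K : Matrix (Fin n) (Fin n) ℝ} (hsymm : K.IsSymm)
    (z : Fin n → ℝ) {k l : ℕ} (hk : 0 < sInf (sparseRayleigh K k)) (hl : 1 ≤ l)
    {L S : Finset (Fin n)} (hcard : (L ∪ S).card ≤ k) :
    sInf (sparseRayleigh K k) / sSup (sparseRayleigh K l) * (gObj K z (L ∪ S) - gObj K z L) ≤
      ∑ j ∈ S, (gObj K z (insert j L) - gObj K z L) :=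
  (isCoerciveOn_sInf_sparseRayleigh hcard).mul_gObj_union_sub_le_sum hk hsymm z fun j _ =>
    diag_le_sSup_sparseRayleigh hl j

/-- **(Lemma 4 of the paper.)** With `m > 0` the smallest `2r`-sparse eigenvalue of the
positive definite Gram matrix `K` and `M` its largest `(r+1)`-sparse eigenvalue, the
SBQ objective `g(S) = z_Sᵀ (K_{SS})⁻¹ z_S` is `(m/M)`-weakly submodular on sets of
bounded size: for disjoint `L, S` with `|L| + |S| ≤ 2r` and `|L| ≤ r`,
`Σ_{j ∈ S} [g(L ∪ {j}) - g(L)] ≥ (m/M) [g(L ∪ S) - g(L)]`. -/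
theorem gObj_weakly_submodular {E : Type*} [NormedAddCommGroup E] [InnerProductSpace ℝ E]
    {n : ℕ} (v : Fin n → E) (K : Matrix (Fin n) (Fin n) ℝ)
    (hK : ∀ i j, K i j = ⟪v i, v j⟫) (hKpd : K.PosDef)
    (μ : E) (z : Fin n → ℝ) (hz : ∀ i, z i = ⟪μ, v i⟫)
    (r : ℕ) (hr : 1 ≤ r)
    (m M : ℝ) (hm : m = sInf (sparseRayleigh K (2 * r))) (hm0 : 0 < m)
    (hM : M = sSup (sparseRayleigh K (r + 1)))
    (L S : Finset (Fin n)) (hdisj : Disjoint L S)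
    (hcard : L.card + S.card ≤ 2 * r) (hLcard : L.card ≤ r) :
    (m / M) * (gObj K z (L ∪ S) - gObj K z L) ≤
      ∑ j ∈ S, (gObj K z (insert j L) - gObj K z L) := by
  subst hm hM
  exact gObj_weakly_submodular_general (isHermitian_iff_isSymm.mp hKpd.isHermitian) z hm0
    (Nat.le_add_left 1 r) ((Finset.card_union_le L S).trans hcard)
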